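/- arXiv:2301.01022 — 2 statements merged into one kernel-verified Lean document; each statement's English description precedes it below -/
import Mathlib

section
/- For all real t with 0 ≤ t ≤ 1 and all γ with 1 < γ ≤ 5/3, setting θ = (γ-1)/2, the function f(t) = (5γ-3)·t^(3θ+1) - 2(3γ-1)·t^(2θ+1) + γ(3-γ)·t^(θ+1) - (3-γ)(γ-1)·t^θ + 2(γ-1) is nonnegative. -/
/-!
With `γ = 1 + 2 θ` and `s = t ^ θ`, half of the function is `F = t s Q(s) + 2 θ D(s)`, where `Q` is
quadratic and `D = 1 - (1 - θ) s`; it vanishes to second order at `t = 1`. Bernoulli's inequality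
for `t ^ θ` and for `t ^ (1 - θ)` compares `t` with `1 + (s - 1) / θ` and with `θ s / D`, both to
first order at `s = 1`. Putting either value for `t` makes the double root at `s = 1` factor out
explicitly, so each comparison settles one sign pattern of `Q` and `D`. This gives `F ≥ 0` for every
`θ > 0` and every `t ≥ 0`.
-/

namespace IsentropicSource

/-- The quadratic `Q(s)` in the decomposition of the source term; `s` stands for `t ^ θ`. -/
def quadraticFactor (θ s : ℝ) : ℝ :=
  (1 + 5 * θ) * s ^ 2 - (2 + 6 * θ) * s + (1 + 2 * θ) * (1 - θ)

/-- Half of the source term for `γ = 1 + 2 * θ`, as a polynomial in the density ratio `t` and `s`,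
where `s` stands for `t ^ θ`. -/
def polynomial (θ s t : ℝ) : ℝ :=
  t * s * quadraticFactor θ s + 2 * θ * (1 - (1 - θ) * s)

theorem mul_polynomial_eq (θ s t : ℝ) :
    θ * polynomial θ s t = s * ((1 + θ * (t - 1) - s) * quadraticFactor θ s)
      + (s - 1) ^ 2 * ((1 + 5 * θ) * s ^ 2 + (5 * θ ^ 2 - 1) * s + 2 * θ ^ 2) := by
  unfold polynomial quadraticFactor
  ring

theorem one_sub_mul_polynomial_eq (θ s t : ℝ) :
    (1 - (1 - θ) * s) * polynomial θ s t
      = s * ((θ * s - t * (1 - (1 - θ) * s)) * -quadraticFactor θ s)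
        + θ * ((s - 1) ^ 2 * ((1 + 5 * θ) * s ^ 2 + 4 * θ * s + 2)) := by
  unfold polynomial quadraticFactor
  ring

section Algebra

variable {θ s t : ℝ}

theorem quadraticFactor_nonneg_of_one_le_one_sub_mul (hθ : 0 ≤ θ) (hs : 0 ≤ s)
    (hθs : 1 ≤ (1 - θ) * s) : 0 ≤ quadraticFactor θ s := by
  have hθ1 : 0 < 1 - θ := pos_of_mul_pos_left (one_pos.trans_le hθs) hs
  have hexpand : (1 - θ) ^ 2 * quadraticFactor θ s = (1 + 5 * θ) * ((1 - θ) * s - 1) ^ 2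
      + 6 * θ * (1 + θ) * ((1 - θ) * s - 1) + θ ^ 2 * (3 - θ) * (1 + 2 * θ) := by
    unfold quadraticFactor
    ring
  have := sub_nonneg.2 hθs
  have : 0 ≤ 3 - θ := by linarith
  refine nonneg_of_mul_nonneg_right ?_ (pow_pos hθ1 2)
  rw [hexpand]
  positivity

theorem polynomial_nonneg_of_quadraticFactor_nonneg (hθ : 0 ≤ θ) (hs : 0 ≤ s) (ht : 0 ≤ t)
    (hD : (1 - θ) * s ≤ 1) (hQ : 0 ≤ quadraticFactor θ s) : 0 ≤ polynomial θ s t :=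
  add_nonneg (mul_nonneg (mul_nonneg ht hs) hQ)
    (mul_nonneg (mul_nonneg zero_le_two hθ) (sub_nonneg.2 hD))

theorem polynomial_nonneg_of_le_of_mul_le (hθ : 0 < θ) (hs : 0 ≤ s) (ht : 0 ≤ t)
    (hst : s ≤ 1 + θ * (t - 1)) (hts : t * (1 - (1 - θ) * s) ≤ θ * s) :
    0 ≤ polynomial θ s t := by
  rcases le_or_gt 1 ((1 - θ) * s) with hD | hD
  · have hQ := quadraticFactor_nonneg_of_one_le_one_sub_mul hθ.le hs hD
    have hs1 : 1 ≤ s := by linarith [mul_nonneg hθ.le hs]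
    have hquadratic : 0 ≤ (1 + 5 * θ) * s ^ 2 + (5 * θ ^ 2 - 1) * s + 2 * θ ^ 2 := by
      calc 0 ≤ s * (s - 1) + 5 * θ * s ^ 2 + 5 * θ ^ 2 * s + 2 * θ ^ 2 := by
            have := sub_nonneg.2 hs1
            positivity
        _ = _ := by ring
    refine nonneg_of_mul_nonneg_right ?_ hθ
    rw [mul_polynomial_eq]
    exact add_nonneg (mul_nonneg hs (mul_nonneg (sub_nonneg.2 hst) hQ))
      (mul_nonneg (sq_nonneg _) hquadratic)
  · rcases le_total 0 (quadraticFactor θ s) with hQ | hQ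
    · exact polynomial_nonneg_of_quadraticFactor_nonneg hθ.le hs ht hD.le hQ
    · refine nonneg_of_mul_nonneg_right ?_ (sub_pos.2 hD)
      rw [one_sub_mul_polynomial_eq]
      exact add_nonneg (mul_nonneg hs (mul_nonneg (sub_nonneg.2 hts) (neg_nonneg.2 hQ)))
        (by positivity)

theorem polynomial_nonneg_of_one_le (hθ : 1 ≤ θ) (hs : 0 ≤ s) (ht : 0 ≤ t)
    (hst : 1 + θ * (t - 1) ≤ s) : 0 ≤ polynomial θ s t := by
  have hθ0 : 0 < θ := one_pos.trans_le hθ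
  rcases le_total 0 (quadraticFactor θ s) with hQ | hQ
  · have hD : (1 - θ) * s ≤ 1 :=
      (mul_nonpos_of_nonpos_of_nonneg (sub_nonpos.2 hθ) hs).trans zero_le_one
    exact polynomial_nonneg_of_quadraticFactor_nonneg hθ0.le hs ht hD hQ
  · have hcoeff : 0 ≤ 5 * θ ^ 2 - 1 := by nlinarith
    refine nonneg_of_mul_nonneg_right ?_ hθ0
    rw [mul_polynomial_eq]
    exact add_nonneg (mul_nonneg hs (mul_nonneg_of_nonpos_of_nonpos (sub_nonpos.2 hst) hQ))
      (by positivity)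

end Algebra

section Bernoulli

variable {θ t : ℝ}

theorem rpow_le_one_add_mul_sub_one (hθ0 : 0 ≤ θ) (hθ1 : θ ≤ 1) (ht : 0 ≤ t) :
    t ^ θ ≤ 1 + θ * (t - 1) := by
  simpa only [add_sub_cancel] using
    rpow_one_add_le_one_add_mul_self (s := t - 1) (by linarith) hθ0 hθ1

theorem one_add_mul_sub_one_le_rpow (hθ : 1 ≤ θ) (ht : 0 ≤ t) :
    1 + θ * (t - 1) ≤ t ^ θ := by
  simpa only [add_sub_cancel] using
    one_add_mul_self_le_rpow_one_add (s := t - 1) (by linarith) hθ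

theorem mul_one_sub_mul_rpow_le (hθ0 : 0 ≤ θ) (hθ1 : θ ≤ 1) (ht : 0 ≤ t) :
    t * (1 - (1 - θ) * t ^ θ) ≤ θ * t ^ θ := by
  have hbound : t ≤ (1 + (1 - θ) * (t - 1)) * t ^ θ :=
    calc t = t ^ (1 - θ) * t ^ θ := by
          rw [← Real.rpow_add_of_nonneg ht (sub_nonneg.2 hθ1) hθ0, sub_add_cancel, Real.rpow_one]
      _ ≤ (1 + (1 - θ) * (t - 1)) * t ^ θ := by
          gcongr
          exact rpow_le_one_add_mul_sub_one (sub_nonneg.2 hθ1) (sub_le_self 1 hθ0) ht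
  linarith

end Bernoulli

theorem polynomial_rpow_nonneg {θ t : ℝ} (hθ : 0 < θ) (ht : 0 ≤ t) :
    0 ≤ polynomial θ (t ^ θ) t := by
  have hs : 0 ≤ t ^ θ := Real.rpow_nonneg ht θ
  rcases le_total θ 1 with hθ1 | hθ1
  · exact polynomial_nonneg_of_le_of_mul_le hθ hs ht
      (rpow_le_one_add_mul_sub_one hθ.le hθ1 ht) (mul_one_sub_mul_rpow_le hθ.le hθ1 ht)
  · exact polynomial_nonneg_of_one_le hθ1 hs ht (one_add_mul_sub_one_le_rpow hθ1 ht)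

theorem two_mul_polynomial_rpow {γ t : ℝ} (hγ : 1 ≤ γ) (ht : 0 ≤ t) :
    2 * polynomial ((γ - 1) / 2) (t ^ ((γ - 1) / 2)) t
      = (5 * γ - 3) * t ^ (3 * ((γ - 1) / 2) + 1) - 2 * (3 * γ - 1) * t ^ (2 * ((γ - 1) / 2) + 1)
        + γ * (3 - γ) * t ^ ((γ - 1) / 2 + 1) - (3 - γ) * (γ - 1) * t ^ ((γ - 1) / 2)
        + 2 * (γ - 1) := by
  obtain ⟨θ, hθ⟩ : ∃ θ, θ = (γ - 1) / 2 := ⟨_, rfl⟩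
  obtain rfl : γ = 1 + 2 * θ := by linarith
  have hθ0 : 0 ≤ θ := by linarith
  have hpow2 : t ^ (2 * θ) = (t ^ θ) ^ 2 := by
    rw [mul_comm, Real.rpow_mul ht, Real.rpow_ofNat]
  have hpow3 : t ^ (3 * θ) = (t ^ θ) ^ 3 := by
    rw [mul_comm, Real.rpow_mul ht, Real.rpow_ofNat]
  rw [← hθ, Real.rpow_add_one' ht (by positivity), Real.rpow_add_one' ht (by positivity),
    Real.rpow_add_one' ht (by positivity), hpow2, hpow3]
  unfold polynomial quadraticFactor
  ring

end IsentropicSource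

theorem stmt_0_general (γ t : ℝ) (hγ : 1 < γ) (ht : 0 ≤ t) :
    0 ≤ (5*γ-3) * t ^ (3*((γ-1)/2)+1) - 2*(3*γ-1) * t ^ (2*((γ-1)/2)+1)
      + γ*(3-γ) * t ^ ((γ-1)/2+1) - (3-γ)*(γ-1) * t ^ ((γ-1)/2) + 2*(γ-1) := by
  rw [← IsentropicSource.two_mul_polynomial_rpow hγ.le ht]
  exact mul_nonneg zero_le_two
    (IsentropicSource.polynomial_rpow_nonneg (half_pos (sub_pos.2 hγ)) ht)

theorem stmt_0 (γ t : ℝ) (hγ1 : 1 < γ) (hγ2 : γ ≤ 5/3)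
    (ht0 : 0 ≤ t) (ht1 : t ≤ 1) :
    0 ≤ (5*γ-3) * t ^ (3*((γ-1)/2)+1) - 2*(3*γ-1) * t ^ (2*((γ-1)/2)+1)
      + γ*(3-γ) * t ^ ((γ-1)/2+1) - (3-γ)*(γ-1) * t ^ ((γ-1)/2) + 2*(γ-1) :=
  stmt_0_general γ t hγ1 ht0
end

section
/- Let 1 < γ ≤ 5/3, θ = (γ-1)/2, ρ̄ > 0. For all ρ with 0 ≤ ρ ≤ ρ̄: (5γ−3)/(γ(γ−1)²)·ρ^(γ+θ) − 2(3γ−1)/(γ(γ−1)²)·ρ̄^θ·ρ^γ + (3−γ)/(γ−1)²·ρ̄^(γ−1)·ρ^(θ+1) − (3−γ)/(γ(γ−1))·ρ̄^γ·ρ^θ + 2/(γ(γ−1))·ρ̄^(γ+θ) ≥ 0, with equality only when ρ = ρ̄. -/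
/-!
Put `a = ρ ^ θ` and `b = ρb ^ θ`. Since `γ = 1 + 2 * θ`, every term is a density times a cubic
monomial in `a` and `b`, and the sum, multiplied by `γ * (γ - 1) ^ 2`, equals
`ρ * (b - a) ^ 2 * ((5 * γ - 3) * a + 2 * (γ + 1) * b) + 4 * b * (b - a + θ * a) * D`, where `D` is
the height at `ρ` of the graph of `x ↦ x ^ (1 + θ)` above its tangent at `ρb`. Strict convexity of
this power gives `0 < D` for `ρ ≠ ρb`, while the remaining factors are nonnegative for `a ≤ b`.
-/

open Real

/-- The left-hand side of the inequality, as a function of the density `ρ` and its upper bound `ρb`.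
The exponent `θ` is a separate argument, constrained to be `(γ - 1) / 2` where this matters. -/
noncomputable def densityGap (γ θ ρb ρ : ℝ) : ℝ :=
  (5 * γ - 3) / (γ * (γ - 1) ^ 2) * ρ ^ (γ + θ)
    - 2 * (3 * γ - 1) / (γ * (γ - 1) ^ 2) * ρb ^ θ * ρ ^ γ
    + (3 - γ) / (γ - 1) ^ 2 * ρb ^ (γ - 1) * ρ ^ (θ + 1)
    - (3 - γ) / (γ * (γ - 1)) * ρb ^ γ * ρ ^ θ
    + 2 / (γ * (γ - 1)) * ρb ^ (γ + θ)

theorem rpow_tangent_lt_rpow {p x y : ℝ} (hp : 1 < p) (hx : 0 ≤ x) (hy : 0 < y) (hxy : x ≠ y) :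
    y ^ p + p * y ^ (p - 1) * (x - y) < x ^ p := by
  have bernoulli : 1 + p * (x / y - 1) < (x / y) ^ p := by
    simpa only [add_sub_cancel] using one_add_mul_self_lt_rpow_one_add
      (s := x / y - 1) (by linarith [div_nonneg hx hy.le])
      (sub_ne_zero.2 (mt (div_eq_one_iff_eq hy.ne').1 hxy)) hp
  calc y ^ p + p * y ^ (p - 1) * (x - y)
      = y ^ p * (1 + p * (x / y - 1)) := by rw [rpow_sub_one hy.ne']; field_simp
    _ < y ^ p * (x / y) ^ p := mul_lt_mul_of_pos_left bernoulli (rpow_pos_of_pos hy p)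
    _ = x ^ p := by rw [← mul_rpow hy.le (div_nonneg hx hy.le), mul_div_cancel₀ _ hy.ne']

theorem rpow_one_add_natCast_mul {x θ : ℝ} (hx : 0 ≤ x) (hθ : 0 ≤ θ) (n : ℕ) :
    x ^ (1 + n * θ) = x * (x ^ θ) ^ n := by
  rw [rpow_add_of_nonneg hx zero_le_one (by positivity), rpow_one, mul_comm (n : ℝ),
    rpow_mul_natCast hx]

theorem densityGap_eq {γ θ ρb ρ : ℝ} (hγ : 1 < γ) (hθ : θ = (γ - 1) / 2) (hρb : 0 ≤ ρb)
    (hρ : 0 ≤ ρ) :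
    densityGap γ θ ρb ρ =
      (ρ * (ρb ^ θ - ρ ^ θ) ^ 2 * ((5 * γ - 3) * ρ ^ θ + 2 * (γ + 1) * ρb ^ θ)
        + 4 * ρb ^ θ * (ρb ^ θ - ρ ^ θ + θ * ρ ^ θ)
          * (ρ ^ (1 + θ) - (ρb ^ (1 + θ) + (1 + θ) * ρb ^ θ * (ρ - ρb))))
      / (γ * (γ - 1) ^ 2) := by
  have hθ0 : 0 < θ := by linarith
  obtain rfl : γ = 1 + 2 * θ := by linarith
  have pow_one_add {x : ℝ} (hx : 0 ≤ x) : x ^ (1 + θ) = x * x ^ θ := by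
    simpa using rpow_one_add_natCast_mul hx hθ0.le 1
  have pow_γ {x : ℝ} (hx : 0 ≤ x) : x ^ (1 + 2 * θ) = x * (x ^ θ) ^ 2 :=
    mod_cast rpow_one_add_natCast_mul hx hθ0.le 2
  have pow_γ_add_θ {x : ℝ} (hx : 0 ≤ x) : x ^ (1 + 2 * θ + θ) = x * (x ^ θ) ^ 3 := by
    rw [← rpow_one_add_natCast_mul hx hθ0.le]
    push_cast
    ring_nf
  have pow_γ_sub_one : ρb ^ (1 + 2 * θ - 1) = (ρb ^ θ) ^ 2 := by
    rw [← rpow_mul_natCast hρb]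
    push_cast
    ring_nf
  rw [densityGap, add_comm θ 1, pow_γ_add_θ hρ, pow_γ_add_θ hρb, pow_γ hρ, pow_γ hρb,
    pow_γ_sub_one, pow_one_add hρ, pow_one_add hρb, add_sub_cancel_left]
  field_simp
  ring

theorem densityGap_self {γ θ ρb : ℝ} (hγ : 1 < γ) (hθ : θ = (γ - 1) / 2) (hρb : 0 ≤ ρb) :
    densityGap γ θ ρb ρb = 0 := by
  simp [densityGap_eq hγ hθ hρb hρb]

theorem densityGap_pos {γ θ ρb ρ : ℝ} (hγ : 1 < γ) (hθ : θ = (γ - 1) / 2) (hρ : 0 ≤ ρ)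
    (hlt : ρ < ρb) : 0 < densityGap γ θ ρb ρ := by
  have hθ0 : 0 < θ := by linarith
  have hρb : 0 < ρb := hρ.trans_lt hlt
  have ha : 0 ≤ ρ ^ θ := rpow_nonneg hρ θ
  have hb : 0 < ρb ^ θ := rpow_pos_of_pos hρb θ
  have hab : 0 < ρb ^ θ - ρ ^ θ := sub_pos.2 (rpow_lt_rpow hρ hlt hθ0)
  have htangent : 0 < ρ ^ (1 + θ) - (ρb ^ (1 + θ) + (1 + θ) * ρb ^ θ * (ρ - ρb)) := by
    simpa only [add_sub_cancel_left, sub_pos] using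
      rpow_tangent_lt_rpow (p := 1 + θ) (by linarith) hρ hρb hlt.ne
  have hγ1 : 0 < γ - 1 := by linarith
  have h5γ : 0 < 5 * γ - 3 := by linarith
  rw [densityGap_eq hγ hθ hρb.le hρ]
  positivity

theorem stmt_9_general {γ θ ρb ρ : ℝ} (hγ : 1 < γ) (hθ : θ = (γ - 1) / 2) (hρ0 : 0 ≤ ρ)
    (hρ : ρ ≤ ρb) : 0 ≤ densityGap γ θ ρb ρ ∧ (densityGap γ θ ρb ρ = 0 ↔ ρ = ρb) := by
  rcases hρ.eq_or_lt with rfl | hlt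
  · simp [densityGap_self hγ hθ hρ0]
  · have hpos := densityGap_pos hγ hθ hρ0 hlt
    exact ⟨hpos.le, iff_of_false hpos.ne' hlt.ne⟩

theorem stmt_9 (γ θ ρb ρ : ℝ) (hγ1 : 1 < γ) (hγ2 : γ ≤ 5/3)
    (hθ : θ = (γ-1)/2) (hρb : 0 < ρb) (hρ0 : 0 ≤ ρ) (hρ : ρ ≤ ρb) :
    0 ≤ ((5*γ-3)/(γ*(γ-1)^2)) * ρ ^ (γ+θ)
      - (2*(3*γ-1)/(γ*(γ-1)^2)) * ρb ^ θ * ρ ^ γ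
      + ((3-γ)/(γ-1)^2) * ρb ^ (γ-1) * ρ ^ (θ+1)
      - ((3-γ)/(γ*(γ-1))) * ρb ^ γ * ρ ^ θ
      + (2/(γ*(γ-1))) * ρb ^ (γ+θ)
    ∧ (((5*γ-3)/(γ*(γ-1)^2)) * ρ ^ (γ+θ)
      - (2*(3*γ-1)/(γ*(γ-1)^2)) * ρb ^ θ * ρ ^ γ
      + ((3-γ)/(γ-1)^2) * ρb ^ (γ-1) * ρ ^ (θ+1)
      - ((3-γ)/(γ*(γ-1))) * ρb ^ γ * ρ ^ θ
      + (2/(γ*(γ-1))) * ρb ^ (γ+θ) = 0 → ρ = ρb) :=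
  (stmt_9_general hγ1 hθ hρ0 hρ).imp_right Iff.mp
end
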